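/- Let p ≥ 3 and q ≥ 5. Suppose Δ₁, S₁ and Δ₂, S₂ arise from two collections of two words of length p as above, with Δᵢ(x) > 0 for real x ≥ 4, and let λᵢ ∈ (q−q^{−p+2}, q) be the unique root of (q−x)Δᵢ(x) − Sᵢ(x) in that interval. If S₁(x)/Δ₁(x) < S₂(x)/Δ₂(x) for all x ∈ (q−q^{−p+2}, q), then λ₂ < λ₁. -/

import Mathlib

/-- Let `p ≥ 3`, `q ≥ 5`. Suppose `Δᵢ, Sᵢ` (i = 1, 2) are continuous functions with
`Δᵢ(x) > 0` for `x ≥ 4`, and `λᵢ ∈ (q − q^{2−p}, q)` is the unique root of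
`(q − x)Δᵢ(x) − Sᵢ(x)` in that interval, with `(q − x)Δᵢ(x) − Sᵢ(x) > 0` at the left
endpoint `x = q − q^{2−p}`. If `S₁(x)/Δ₁(x) < S₂(x)/Δ₂(x)` for all
`x ∈ (q − q^{2−p}, q)`, then `λ₂ < λ₁`. -/
theorem lam_comparison (p q : ℕ) (hp : 3 ≤ p) (hq : 5 ≤ q)
    (D₁ S₁ D₂ S₂ : ℝ → ℝ)
    (hD₁c : Continuous D₁) (hS₁c : Continuous S₁)
    (hD₂c : Continuous D₂) (hS₂c : Continuous S₂)
    (hD₁pos : ∀ x : ℝ, 4 ≤ x → 0 < D₁ x)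
    (hD₂pos : ∀ x : ℝ, 4 ≤ x → 0 < D₂ x)
    (lam₁ lam₂ : ℝ)
    (hlam₁ : lam₁ ∈ Set.Ioo ((q : ℝ) - (q : ℝ) ^ ((2 : ℤ) - (p : ℤ))) (q : ℝ))
    (hlam₂ : lam₂ ∈ Set.Ioo ((q : ℝ) - (q : ℝ) ^ ((2 : ℤ) - (p : ℤ))) (q : ℝ))
    (hroot₁ : ((q : ℝ) - lam₁) * D₁ lam₁ - S₁ lam₁ = 0)
    (hroot₂ : ((q : ℝ) - lam₂) * D₂ lam₂ - S₂ lam₂ = 0)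
    (huniq₁ : ∀ x ∈ Set.Ioo ((q : ℝ) - (q : ℝ) ^ ((2 : ℤ) - (p : ℤ))) (q : ℝ),
      ((q : ℝ) - x) * D₁ x - S₁ x = 0 → x = lam₁)
    (huniq₂ : ∀ x ∈ Set.Ioo ((q : ℝ) - (q : ℝ) ^ ((2 : ℤ) - (p : ℤ))) (q : ℝ),
      ((q : ℝ) - x) * D₂ x - S₂ x = 0 → x = lam₂)
    (hend₁ : 0 < ((q : ℝ) - ((q : ℝ) - (q : ℝ) ^ ((2 : ℤ) - (p : ℤ)))) *
        D₁ ((q : ℝ) - (q : ℝ) ^ ((2 : ℤ) - (p : ℤ))) -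
        S₁ ((q : ℝ) - (q : ℝ) ^ ((2 : ℤ) - (p : ℤ))))
    (hend₂ : 0 < ((q : ℝ) - ((q : ℝ) - (q : ℝ) ^ ((2 : ℤ) - (p : ℤ)))) *
        D₂ ((q : ℝ) - (q : ℝ) ^ ((2 : ℤ) - (p : ℤ))) -
        S₂ ((q : ℝ) - (q : ℝ) ^ ((2 : ℤ) - (p : ℤ))))
    (hr : ∀ x ∈ Set.Ioo ((q : ℝ) - (q : ℝ) ^ ((2 : ℤ) - (p : ℤ))) (q : ℝ),
      S₁ x / D₁ x < S₂ x / D₂ x) :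
    lam₂ < lam₁ := by
  have hq' : (5 : ℝ) ≤ q := by exact_mod_cast hq
  have hpow : (q : ℝ) ^ ((2 : ℤ) - (p : ℤ)) ≤ 1 :=
    zpow_le_one_of_nonpos₀ (by linarith) (by omega)
  have h4 : 4 ≤ lam₁ := by linarith [hlam₁.1]
  have hd1 := hD₁pos _ h4
  have hd2 := hD₂pos _ h4
  have h := hr lam₁ hlam₁
  have e : S₁ lam₁ / D₁ lam₁ = q - lam₁ := by
    rw [div_eq_iff hd1.ne']; linarith
  rw [e, lt_div_iff₀ hd2] at h
  have hc : ContinuousOn (fun x : ℝ => ((q : ℝ) - x) * D₂ x - S₂ x)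
      (Set.Icc ((q : ℝ) - (q : ℝ) ^ ((2 : ℤ) - (p : ℤ))) lam₁) := by
    apply Continuous.continuousOn
    fun_prop
  obtain ⟨x, hx, hx0⟩ := intermediate_value_Ioo' hlam₁.1.le hc
    (show (0 : ℝ) ∈ _ from ⟨by linarith, hend₂⟩)
  rw [← huniq₂ x ⟨hx.1, hx.2.trans hlam₁.2⟩ hx0]
  exact hx.2
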